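/- Let (C, δ) and (D, ∂) be S¹-complexes over a commutative ring K and let κ = (κ₀, κ₁, …) be an S¹-equivariant chain map between them. If κ₀ : (C, δ₀) → (D, ∂₀) is a quasi-isomorphism, then the induced map κ^{S¹} : C⁻ → D⁻ induces an isomorphism on negative cyclic homology HC⁻_*(C) ≅ HC⁻_*(D); more generally, for every integer n the induced map H_*(uⁿC⁻, δ^{S¹}) → H_*(uⁿD⁻, ∂^{S¹}) is an isomorphism. -/

import Mathlib

open Finset DirectSum

set_option maxHeartbeats 1000000
set_option synthInstance.maxHeartbeats 1000000

noncomputable section Lib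

variable (K : Type) [CommRing K]

/-- Transport of graded components along an equality of degrees. -/
def pcast (F : ℤ → Type) [∀ n, AddCommGroup (F n)] [∀ n, Module K (F n)]
    {a b : ℤ} (h : a = b) : F a →ₗ[K] F b := by subst h; exact LinearMap.id

/-- Transport of graded components along an equality of degrees when it holds
(and the zero map otherwise). -/
def tr (F : ℤ → Type) [∀ n, AddCommGroup (F n)] [∀ n, Module K (F n)]
    (a b : ℤ) : F a →ₗ[K] F b := if h : a = b then pcast K F h else 0

variable (C : ℤ → Type) [∀ n, AddCommGroup (C n)] [∀ n, Module K (C n)]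
variable (D : ℤ → Type) [∀ n, AddCommGroup (D n)] [∀ n, Module K (D n)]
variable (E : ℤ → Type) [∀ n, AddCommGroup (E n)] [∀ n, Module K (E n)]

/-- An S¹-structure on a ℤ-graded `K`-module `C`: a sequence of operations
`δ i : Cⁿ → C^{n+1-2i}` with `∑_{i+j=k} δ i ∘ δ j = 0` for all `k ≥ 0`. -/
structure S1Struct where
  δ : (i : ℕ) → (n : ℤ) → C n →ₗ[K] C (n + 1 - 2 * (i : ℤ))
  rel : ∀ (k : ℕ) (n : ℤ) (x : C n),
    ∑ p ∈ antidiagonal k,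
      tr K C (n + 1 - 2 * (p.2 : ℤ) + 1 - 2 * (p.1 : ℤ)) (n + 2 - 2 * (k : ℤ))
        (δ p.1 (n + 1 - 2 * (p.2 : ℤ)) (δ p.2 n x)) = 0

/-- An S¹-equivariant chain map between S¹-complexes: a sequence of operations
`κ i : Cⁿ → D^{n-2i}` with `∑_{i+j=k} (κ i ∘ δ j - ∂ j ∘ κ i) = 0` for all `k ≥ 0`. -/
structure S1Map (S : S1Struct K C) (T : S1Struct K D) where
  κ : (i : ℕ) → (n : ℤ) → C n →ₗ[K] D (n - 2 * (i : ℤ))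
  rel : ∀ (k : ℕ) (n : ℤ) (x : C n),
    ∑ p ∈ antidiagonal k,
      (tr K D (n + 1 - 2 * (p.2 : ℤ) - 2 * (p.1 : ℤ)) (n + 1 - 2 * (k : ℤ))
          (κ p.1 (n + 1 - 2 * (p.2 : ℤ)) (S.δ p.2 n x))
        - tr K D (n - 2 * (p.1 : ℤ) + 1 - 2 * (p.2 : ℤ)) (n + 1 - 2 * (k : ℤ))
          (T.δ p.2 (n - 2 * (p.1 : ℤ)) (κ p.1 n x))) = 0

/-- An S¹-equivariant chain homotopy between two S¹-equivariant chain maps: a sequence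
of operations `h i : Cⁿ → D^{n-2i-1}` with
`κ k - κ' k = ∑_{i+j=k} (h i ∘ δ j + ∂ j ∘ h i)` for all `k ≥ 0`. -/
structure S1Homotopy {S : S1Struct K C} {T : S1Struct K D} (κ κ' : S1Map K C D S T) where
  h : (i : ℕ) → (n : ℤ) → C n →ₗ[K] D (n - 2 * (i : ℤ) - 1)
  rel : ∀ (k : ℕ) (n : ℤ) (x : C n),
    κ.κ k n x - κ'.κ k n x =
      ∑ p ∈ antidiagonal k,
        (tr K D (n + 1 - 2 * (p.2 : ℤ) - 2 * (p.1 : ℤ) - 1) (n - 2 * (k : ℤ))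
            (h p.1 (n + 1 - 2 * (p.2 : ℤ)) (S.δ p.2 n x))
          + tr K D (n - 2 * (p.1 : ℤ) - 1 + 1 - 2 * (p.2 : ℤ)) (n - 2 * (k : ℤ))
            (T.δ p.2 (n - 2 * (p.1 : ℤ) - 1) (h p.1 n x)))

/-- The degree `n` part of the negative cyclic complex `C⁻ = C[[u]]`:
formal power series `∑_{i ≥ 0} aᵢ uⁱ` with `aᵢ ∈ C^{n-2i}`. -/
abbrev NegCyc (n : ℤ) : Type := (i : ℕ) → C (n - 2 * (i : ℤ))

/-- The componentwise extension `(∑ uⁱ F i) (∑ aⱼ uʲ) = ∑_k (∑_{i+j=k} F i (aⱼ)) u^k`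
of a sequence of operations `F i` of degree `e - 2i` to the power series complexes. -/
def nExt (e : ℤ) (F : (i : ℕ) → (m : ℤ) → C m →ₗ[K] D (m + e - 2 * (i : ℤ))) (n t : ℤ) :
    NegCyc C n →ₗ[K] NegCyc D t where
  toFun x k := ∑ p ∈ antidiagonal k,
    tr K D (n - 2 * (p.2 : ℤ) + e - 2 * (p.1 : ℤ)) (t - 2 * (k : ℤ))
      (F p.1 (n - 2 * (p.2 : ℤ)) (x p.2))
  map_add' x y := by
    funext k
    simp [Finset.sum_add_distrib]
  map_smul' c x := by
    funext k
    simp [Finset.smul_sum]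

/-- The equivariant differential `δ^{S¹} = δ₀ + uδ₁ + u²δ₂ + ⋯` on `C⁻`. -/
def deltaNeg (S : S1Struct K C) (n : ℤ) : NegCyc C n →ₗ[K] NegCyc C (n + 1) :=
  nExt K C C 1 S.δ n (n + 1)

/-- The map `κ^{S¹} = κ₀ + uκ₁ + u²κ₂ + ⋯ : C⁻ → D⁻`. -/
def kappaNeg {S : S1Struct K C} {T : S1Struct K D} (κ : S1Map K C D S T) (n : ℤ) :
    NegCyc C n →ₗ[K] NegCyc D n :=
  nExt K C D 0 (fun i m => tr K D (m - 2 * (i : ℤ)) (m + 0 - 2 * (i : ℤ)) ∘ₗ κ.κ i m) n n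

/-- The map `H = h₀ + uh₁ + u²h₂ + ⋯ : C⁻ → D⁻[-1]`. -/
def homotopyNeg {S : S1Struct K C} {T : S1Struct K D} {κ κ' : S1Map K C D S T}
    (ht : S1Homotopy K C D κ κ') (n : ℤ) : NegCyc C n →ₗ[K] NegCyc D (n - 1) :=
  nExt K C D (-1) (fun i m => tr K D (m - 2 * (i : ℤ) - 1) (m + (-1) - 2 * (i : ℤ)) ∘ₗ ht.h i m)
    n (n - 1)

/-- The degree `n` part of the periodic complex `C^∧ = C((u))`, as a submodule of all
families `(aᵢ)_{i ∈ ℤ}` with `aᵢ ∈ C^{n-2i}`: those with `aᵢ = 0` for all sufficiently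
negative `i` (formal Laurent series). -/
def PerSub (n : ℤ) : Submodule K ((i : ℤ) → C (n - 2 * i)) where
  carrier := {x | ∃ N : ℤ, ∀ i < N, x i = 0}
  add_mem' := by
    rintro a b ⟨Na, ha⟩ ⟨Nb, hb⟩
    refine ⟨min Na Nb, fun i hi => ?_⟩
    have h1 := ha i (lt_of_lt_of_le hi (min_le_left _ _))
    have h2 := hb i (lt_of_lt_of_le hi (min_le_right _ _))
    show a i + b i = 0
    rw [h1, h2, add_zero]
  zero_mem' := ⟨0, fun _ _ => rfl⟩
  smul_mem' := by
    rintro c a ⟨N, hN⟩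
    refine ⟨N, fun i hi => ?_⟩
    show c • a i = 0
    rw [hN i hi, smul_zero]

/-- The degree `n` part of the periodic complex `C^∧ = C((u))`. -/
abbrev PerCyc (n : ℤ) : Type := ↥(PerSub K C n)

lemma natle_finite (m : ℤ) : Set.Finite {i : ℕ | (i : ℤ) ≤ m} := by
  apply Set.Finite.subset (Set.finite_Iic m.toNat)
  intro i hi
  simp only [Set.mem_setOf_eq] at hi
  simp only [Set.mem_Iic]
  omega

lemma uExt_sf (e : ℤ) (F : (i : ℕ) → (m : ℤ) → C m →ₗ[K] D (m + e - 2 * (i : ℤ))) (n t : ℤ)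
    (x : PerCyc K C n) (k : ℤ) :
    (Function.support fun i : ℕ =>
      tr K D (n - 2 * (k - (i : ℤ)) + e - 2 * (i : ℤ)) (t - 2 * k)
        (F i (n - 2 * (k - (i : ℤ))) (x.1 (k - (i : ℤ))))).Finite := by
  obtain ⟨N, hN⟩ := x.2
  apply Set.Finite.subset (natle_finite (k - N))
  intro i hi
  simp only [Function.mem_support] at hi
  simp only [Set.mem_setOf_eq]
  by_contra hcon
  push_neg at hcon
  rw [hN (k - (i : ℤ)) (by omega)] at hi
  simp at hi

/-- Componentwise extension of a sequence of operations `F i` of degree `e - 2i` to the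
Laurent series complexes: `(∑ aᵢ uⁱ) ↦ ∑_k (∑_{i≥0} F i (a_{k-i})) u^k`
(valued in the ambient product). -/
def uExtAux (e : ℤ) (F : (i : ℕ) → (m : ℤ) → C m →ₗ[K] D (m + e - 2 * (i : ℤ))) (n t : ℤ) :
    PerCyc K C n →ₗ[K] ((k : ℤ) → D (t - 2 * k)) where
  toFun x k := ∑ᶠ i : ℕ,
    tr K D (n - 2 * (k - (i : ℤ)) + e - 2 * (i : ℤ)) (t - 2 * k)
      (F i (n - 2 * (k - (i : ℤ))) (x.1 (k - (i : ℤ))))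
  map_add' x y := by
    funext k
    simp only [Pi.add_apply]
    rw [← finsum_add_distrib (uExt_sf K C D e F n t x k) (uExt_sf K C D e F n t y k)]
    apply finsum_congr
    intro i
    have hxy : (↑(x + y) : (i : ℤ) → C (n - 2 * i)) (k - (i : ℤ))
        = x.1 (k - (i : ℤ)) + y.1 (k - (i : ℤ)) := rfl
    rw [hxy, map_add, map_add]
  map_smul' c x := by
    funext k
    simp only [Pi.smul_apply, RingHom.id_apply]
    rw [smul_finsum' c (uExt_sf K C D e F n t x k)]
    apply finsum_congr
    intro i
    have hcx : (↑(c • x) : (i : ℤ) → C (n - 2 * i)) (k - (i : ℤ))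
        = c • x.1 (k - (i : ℤ)) := rfl
    rw [hcx, map_smul, map_smul]

@[simp] lemma uExtAux_apply (e : ℤ) (F : (i : ℕ) → (m : ℤ) → C m →ₗ[K] D (m + e - 2 * (i : ℤ)))
    (n t : ℤ) (x : PerCyc K C n) (k : ℤ) :
    uExtAux K C D e F n t x k = ∑ᶠ i : ℕ,
      tr K D (n - 2 * (k - (i : ℤ)) + e - 2 * (i : ℤ)) (t - 2 * k)
        (F i (n - 2 * (k - (i : ℤ))) (x.1 (k - (i : ℤ)))) := rfl

lemma uExtAux_mem (e : ℤ) (F : (i : ℕ) → (m : ℤ) → C m →ₗ[K] D (m + e - 2 * (i : ℤ)))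
    (n t : ℤ) (x : PerCyc K C n) : uExtAux K C D e F n t x ∈ PerSub K D t := by
  obtain ⟨N, hN⟩ := x.2
  refine ⟨N, fun k hk => ?_⟩
  rw [uExtAux_apply]
  apply finsum_eq_zero_of_forall_eq_zero
  intro i
  rw [hN (k - (i : ℤ)) (by omega)]
  simp

/-- Componentwise extension of a sequence of operations `F i` of degree `e - 2i` to the
complexes of formal Laurent series. -/
def uExt (e : ℤ) (F : (i : ℕ) → (m : ℤ) → C m →ₗ[K] D (m + e - 2 * (i : ℤ))) (n t : ℤ) :
    PerCyc K C n →ₗ[K] PerCyc K D t :=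
  LinearMap.codRestrict (PerSub K D t) (uExtAux K C D e F n t) (uExtAux_mem K C D e F n t)

@[simp] lemma uExt_coe_apply (e : ℤ) (F : (i : ℕ) → (m : ℤ) → C m →ₗ[K] D (m + e - 2 * (i : ℤ)))
    (n t : ℤ) (x : PerCyc K C n) (k : ℤ) :
    (uExt K C D e F n t x).1 k = ∑ᶠ i : ℕ,
      tr K D (n - 2 * (k - (i : ℤ)) + e - 2 * (i : ℤ)) (t - 2 * k)
        (F i (n - 2 * (k - (i : ℤ))) (x.1 (k - (i : ℤ)))) := rfl

/-- The equivariant differential `δ^{S¹} = δ₀ + uδ₁ + u²δ₂ + ⋯` on `C^∧ = C((u))`. -/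
def deltaPer (S : S1Struct K C) (n : ℤ) : PerCyc K C n →ₗ[K] PerCyc K C (n + 1) :=
  uExt K C C 1 S.δ n (n + 1)

/-- The map `κ^{S¹} = κ₀ + uκ₁ + u²κ₂ + ⋯ : C^∧ → D^∧`. -/
def kappaPer {S : S1Struct K C} {T : S1Struct K D} (κ : S1Map K C D S T) (n : ℤ) :
    PerCyc K C n →ₗ[K] PerCyc K D n :=
  uExt K C D 0 (fun i m => tr K D (m - 2 * (i : ℤ)) (m + 0 - 2 * (i : ℤ)) ∘ₗ κ.κ i m) n n

/-- The map `H = h₀ + uh₁ + u²h₂ + ⋯ : C^∧ → D^∧[-1]`. -/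
def homotopyPer {S : S1Struct K C} {T : S1Struct K D} {κ κ' : S1Map K C D S T}
    (ht : S1Homotopy K C D κ κ') (n : ℤ) : PerCyc K C n →ₗ[K] PerCyc K D (n - 1) :=
  uExt K C D (-1) (fun i m => tr K D (m - 2 * (i : ℤ) - 1) (m + (-1) - 2 * (i : ℤ)) ∘ₗ ht.h i m)
    n (n - 1)

/-- The submodule `u^m C⁻ ⊆ C^∧` of Laurent series supported in powers `≥ m`. -/
def uPow (m : ℤ) (n : ℤ) : Submodule K (PerCyc K C n) where
  carrier := {x | ∀ i < m, x.1 i = 0}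
  add_mem' := by
    intro a b ha hb i hi
    show a.1 i + b.1 i = 0
    rw [ha i hi, hb i hi, add_zero]
  zero_mem' := fun _ _ => rfl
  smul_mem' := by
    intro c a ha i hi
    show c • a.1 i = 0
    rw [ha i hi, smul_zero]

lemma uExt_mem_uPow (e : ℤ) (F : (i : ℕ) → (m : ℤ) → C m →ₗ[K] D (m + e - 2 * (i : ℤ)))
    (n t : ℤ) (m : ℤ) (x : PerCyc K C n) (hx : x ∈ uPow K C m n) :
    uExt K C D e F n t x ∈ uPow K D m t := by
  intro k hk
  rw [uExt_coe_apply]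
  apply finsum_eq_zero_of_forall_eq_zero
  intro i
  rw [hx (k - (i : ℤ)) (by omega)]
  simp

/-- The restriction of `δ^{S¹}` to the subcomplex `u^m C⁻ ⊆ C^∧`. -/
def deltaRes (S : S1Struct K C) (m n : ℤ) : ↥(uPow K C m n) →ₗ[K] ↥(uPow K C m (n + 1)) :=
  (deltaPer K C S n).restrict (fun x hx => uExt_mem_uPow K C C 1 S.δ n (n + 1) m x hx)

/-- The restriction of `κ^{S¹}` to the subcomplexes `u^m C⁻ → u^m D⁻`. -/
def kappaRes {S : S1Struct K C} {T : S1Struct K D} (κ : S1Map K C D S T) (m n : ℤ) :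
    ↥(uPow K C m n) →ₗ[K] ↥(uPow K D m n) :=
  (kappaPer K C D κ n).restrict
    (fun x hx => uExt_mem_uPow K C D 0
      (fun i m => tr K D (m - 2 * (i : ℤ)) (m + 0 - 2 * (i : ℤ)) ∘ₗ κ.κ i m) n n m x hx)

/-- The degree `n` part of the quotient complex `C⁺ = C^∧ / uC⁻`. -/
abbrev QtC (n : ℤ) : Type := PerCyc K C n ⧸ uPow K C 1 n

/-- The operator on `C⁺ = C^∧/uC⁻` induced by `δ^{S¹}`. -/
def deltaPlus (S : S1Struct K C) (n : ℤ) : QtC K C n →ₗ[K] QtC K C (n + 1) :=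
  Submodule.mapQ _ _ (deltaPer K C S n)
    (fun x hx => uExt_mem_uPow K C C 1 S.δ n (n + 1) 1 x hx)

/-- The map `C⁺ → D⁺` induced by `κ^{S¹}`. -/
def kappaPlus {S : S1Struct K C} {T : S1Struct K D} (κ : S1Map K C D S T) (n : ℤ) :
    QtC K C n →ₗ[K] QtC K D n :=
  Submodule.mapQ _ _ (kappaPer K C D κ n)
    (fun x hx => uExt_mem_uPow K C D 0
      (fun i m => tr K D (m - 2 * (i : ℤ)) (m + 0 - 2 * (i : ℤ)) ∘ₗ κ.κ i m) n n 1 x hx)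

/-- The map `C⁺ → D⁺[-1]` induced by an S¹-equivariant chain homotopy. -/
def homotopyPlus {S : S1Struct K C} {T : S1Struct K D} {κ κ' : S1Map K C D S T}
    (ht : S1Homotopy K C D κ κ') (n : ℤ) : QtC K C n →ₗ[K] QtC K D (n - 1) :=
  Submodule.mapQ _ _ (homotopyPer K C D ht n)
    (fun x hx => uExt_mem_uPow K C D (-1)
      (fun i m => tr K D (m - 2 * (i : ℤ) - 1) (m + (-1) - 2 * (i : ℤ)) ∘ₗ ht.h i m)
      n (n - 1) 1 x hx)

/-- The homology in degree `n` of a cochain complex of `K`-modules given degreewise by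
`d n : F n → F (n+1)`: the kernel of `d n` modulo the image of `d (n-1)`. -/
abbrev HomologyOf (F : ℤ → Type) [∀ n, AddCommGroup (F n)] [∀ n, Module K (F n)]
    (d : (n : ℤ) → F n →ₗ[K] F (n + 1)) (n : ℤ) : Type :=
  ↥(LinearMap.ker (d n)) ⧸
    Submodule.comap (LinearMap.ker (d n)).subtype
      (LinearMap.range (pcast K F (show n - 1 + 1 = n by ring) ∘ₗ d (n - 1)))

/-- A chain map `f` between cochain complexes `(F, dF)` and `(G, dG)` induces an isomorphism
on homology in every degree: for every `n` there is a bijective linear map between the homology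
groups sending the class of a cycle `x` to the class of the cycle `f n x`. -/
def InducesIso (F : ℤ → Type) [∀ n, AddCommGroup (F n)] [∀ n, Module K (F n)]
    (G : ℤ → Type) [∀ n, AddCommGroup (G n)] [∀ n, Module K (G n)]
    (dF : (n : ℤ) → F n →ₗ[K] F (n + 1)) (dG : (n : ℤ) → G n →ₗ[K] G (n + 1))
    (f : (n : ℤ) → F n →ₗ[K] G n) : Prop :=
  ∀ n : ℤ, ∃ φ : HomologyOf K F dF n →ₗ[K] HomologyOf K G dG n,
    Function.Bijective φ ∧
    ∀ (x : F n) (hx : x ∈ LinearMap.ker (dF n)) (hy : f n x ∈ LinearMap.ker (dG n)),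
      φ (Submodule.Quotient.mk ⟨x, hx⟩) = Submodule.Quotient.mk ⟨f n x, hy⟩

/-- The differential `δ₀` of an S¹-complex, as a degree `+1` operator. -/
def d0 (S : S1Struct K C) (n : ℤ) : C n →ₗ[K] C (n + 1) :=
  tr K C (n + 1 - 2 * ((0 : ℕ) : ℤ)) (n + 1) ∘ₗ S.δ 0 n

/-- The leading term `κ₀` of an S¹-equivariant chain map, as a degree `0` operator. -/
def k0 {S : S1Struct K C} {T : S1Struct K D} (κ : S1Map K C D S T) (n : ℤ) :
    C n →ₗ[K] D n :=
  tr K D (n - 2 * ((0 : ℕ) : ℤ)) n ∘ₗ κ.κ 0 n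

/-- The degree `d` part of the truncated complex `C⟨m,n⟩ = uⁿC⁻/u^mC⁻`: families
`(a_p)_{n ≤ p ≤ m-1}` with `a_p ∈ C^{d-2p}`, realized as families over `ℤ`
vanishing outside `[n, m-1]`. -/
def truncSub (m n d : ℤ) : Submodule K ((p : ℤ) → C (d - 2 * p)) where
  carrier := {a | ∀ p : ℤ, (p < n ∨ m ≤ p) → a p = 0}
  add_mem' := by
    intro a b ha hb p hp
    show a p + b p = 0
    rw [ha p hp, hb p hp, add_zero]
  zero_mem' := fun _ _ => rfl
  smul_mem' := by
    intro c a ha p hp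
    show c • a p = 0
    rw [ha p hp, smul_zero]

/-- The differential of the truncated complex `C⟨m,n⟩`, with components
`(δ^{S¹}x)_q = ∑_{i ≥ 0, q-i ≥ n} δᵢ(x_{q-i})` for `n ≤ q ≤ m-1`
(valued in the ambient product). -/
def truncDAux (S : S1Struct K C) (m n d : ℤ) :
    ↥(truncSub K C m n d) →ₗ[K] ((q : ℤ) → C (d + 1 - 2 * q)) where
  toFun x q :=
    if n ≤ q ∧ q < m then
      ∑ i ∈ Finset.range ((q - n).toNat + 1),
        tr K C (d - 2 * (q - (i : ℤ)) + 1 - 2 * (i : ℤ)) (d + 1 - 2 * q)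
          (S.δ i (d - 2 * (q - (i : ℤ))) (x.1 (q - (i : ℤ))))
    else 0
  map_add' x y := by
    funext q
    by_cases h : n ≤ q ∧ q < m
    · simp only [Pi.add_apply, if_pos h]
      rw [← Finset.sum_add_distrib]
      apply Finset.sum_congr rfl
      intro i _
      have hxy : (↑(x + y) : (p : ℤ) → C (d - 2 * p)) (q - (i : ℤ))
          = x.1 (q - (i : ℤ)) + y.1 (q - (i : ℤ)) := rfl
      rw [hxy, map_add, map_add]
    · simp only [Pi.add_apply, if_neg h, add_zero]
  map_smul' c x := by
    funext q
    by_cases h : n ≤ q ∧ q < m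
    · simp only [Pi.smul_apply, RingHom.id_apply, if_pos h]
      rw [Finset.smul_sum]
      apply Finset.sum_congr rfl
      intro i _
      have hcx : (↑(c • x) : (p : ℤ) → C (d - 2 * p)) (q - (i : ℤ))
          = c • x.1 (q - (i : ℤ)) := rfl
      rw [hcx, map_smul, map_smul]
    · simp only [Pi.smul_apply, RingHom.id_apply, if_neg h, smul_zero]

@[simp] lemma truncDAux_apply (S : S1Struct K C) (m n d : ℤ) (x : ↥(truncSub K C m n d))
    (q : ℤ) : truncDAux K C S m n d x q =
    if n ≤ q ∧ q < m then
      ∑ i ∈ Finset.range ((q - n).toNat + 1),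
        tr K C (d - 2 * (q - (i : ℤ)) + 1 - 2 * (i : ℤ)) (d + 1 - 2 * q)
          (S.δ i (d - 2 * (q - (i : ℤ))) (x.1 (q - (i : ℤ))))
    else 0 := rfl

lemma truncDAux_mem (S : S1Struct K C) (m n d : ℤ) (x : ↥(truncSub K C m n d)) :
    truncDAux K C S m n d x ∈ truncSub K C m n (d + 1) := by
  intro q hq
  rw [truncDAux_apply, if_neg (by omega)]

/-- The differential of the truncated complex `C⟨m,n⟩ = uⁿC⁻/u^mC⁻`. -/
def truncD (S : S1Struct K C) (m n d : ℤ) :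
    ↥(truncSub K C m n d) →ₗ[K] ↥(truncSub K C m n (d + 1)) :=
  LinearMap.codRestrict _ (truncDAux K C S m n d) (truncDAux_mem K C S m n d)

/-- The chain map `κ⟨m,n⟩ : C⟨m,n⟩ → D⟨m,n⟩` induced by an S¹-equivariant chain map,
with components `(κ⟨m,n⟩x)_q = ∑_{i ≥ 0, q-i ≥ n} κᵢ(x_{q-i})`
(valued in the ambient product). -/
def truncKAux {S : S1Struct K C} {T : S1Struct K D} (κ : S1Map K C D S T) (m n d : ℤ) :
    ↥(truncSub K C m n d) →ₗ[K] ((q : ℤ) → D (d - 2 * q)) where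
  toFun x q :=
    if n ≤ q ∧ q < m then
      ∑ i ∈ Finset.range ((q - n).toNat + 1),
        tr K D (d - 2 * (q - (i : ℤ)) - 2 * (i : ℤ)) (d - 2 * q)
          (κ.κ i (d - 2 * (q - (i : ℤ))) (x.1 (q - (i : ℤ))))
    else 0
  map_add' x y := by
    funext q
    by_cases h : n ≤ q ∧ q < m
    · simp only [Pi.add_apply, if_pos h]
      rw [← Finset.sum_add_distrib]
      apply Finset.sum_congr rfl
      intro i _
      have hxy : (↑(x + y) : (p : ℤ) → C (d - 2 * p)) (q - (i : ℤ))
          = x.1 (q - (i : ℤ)) + y.1 (q - (i : ℤ)) := rfl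
      rw [hxy, map_add, map_add]
    · simp only [Pi.add_apply, if_neg h, add_zero]
  map_smul' c x := by
    funext q
    by_cases h : n ≤ q ∧ q < m
    · simp only [Pi.smul_apply, RingHom.id_apply, if_pos h]
      rw [Finset.smul_sum]
      apply Finset.sum_congr rfl
      intro i _
      have hcx : (↑(c • x) : (p : ℤ) → C (d - 2 * p)) (q - (i : ℤ))
          = c • x.1 (q - (i : ℤ)) := rfl
      rw [hcx, map_smul, map_smul]
    · simp only [Pi.smul_apply, RingHom.id_apply, if_neg h, smul_zero]

lemma truncKAux_mem {S : S1Struct K C} {T : S1Struct K D} (κ : S1Map K C D S T)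
    (m n d : ℤ) (x : ↥(truncSub K C m n d)) :
    truncKAux K C D κ m n d x ∈ truncSub K D m n d := by
  intro q hq
  show (if n ≤ q ∧ q < m then _ else 0) = 0
  rw [if_neg (by omega)]

/-- The chain map `κ⟨m,n⟩ : C⟨m,n⟩ → D⟨m,n⟩` induced by an S¹-equivariant chain map. -/
def truncK {S : S1Struct K C} {T : S1Struct K D} (κ : S1Map K C D S T) (m n d : ℤ) :
    ↥(truncSub K C m n d) →ₗ[K] ↥(truncSub K D m n d) :=
  LinearMap.codRestrict _ (truncKAux K C D κ m n d) (truncKAux_mem K C D κ m n d)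

end Lib

section Aux

/-! ### Triangular systems -/

section Tri
variable {K : Type} [CommRing K] {A B Z : ℕ → Type}
  [∀ k, AddCommGroup (A k)] [∀ k, Module K (A k)]
  [∀ k, AddCommGroup (B k)] [∀ k, Module K (B k)]
  [∀ k, AddCommGroup (Z k)] [∀ k, Module K (Z k)]

lemma tri_dd (f : (k j : ℕ) → A j →ₗ[K] B k) (g : (k j : ℕ) → B j →ₗ[K] Z k)
    (hfg : ∀ k j, j ≤ k → ∀ a : A j, ∑ l ∈ Finset.Icc j k, g k l (f l j a) = 0)
    (a : ∀ j, A j) (k : ℕ) :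
    ∑ l ∈ range (k + 1), g k l (∑ j ∈ range (l + 1), f l j (a j)) = 0 := by
  simp only [map_sum]
  rw [Finset.sum_comm' (t' := range (k + 1)) (s' := fun j => Finset.Icc j k)]
  · apply Finset.sum_eq_zero
    intro j hj
    exact hfg k j (by simp at hj; omega) (a j)
  · intro x y
    simp only [Finset.mem_range, Finset.mem_Icc]
    omega

noncomputable def triSol (f : (k j : ℕ) → A j →ₗ[K] B k) (b : ∀ k, B k) (k : ℕ) : A k :=
  Classical.epsilon (fun a0 => f k k a0 = b k - ∑ j : Fin k, f k j (triSol f b j))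
termination_by k
decreasing_by exact j.2

lemma triSol_spec (f : (k j : ℕ) → A j →ₗ[K] B k) (b : ∀ k, B k) (k : ℕ)
    (h : ∃ a0, f k k a0 = b k - ∑ j ∈ range k, f k j (triSol f b j)) :
    ∑ j ∈ range (k + 1), f k j (triSol f b j) = b k := by
  rw [← Fin.sum_univ_eq_sum_range (fun j => f k j (triSol f b j))] at h
  have := Classical.epsilon_spec h
  rw [Finset.sum_range_succ]
  have e : f k k (triSol f b k) = b k - ∑ j : Fin k, f k j (triSol f b j) := by
    conv_lhs => rw [triSol]
    exact this
  rw [e, ← Fin.sum_univ_eq_sum_range (fun j => f k j (triSol f b j))]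
  abel

lemma tri_exact (f : (k j : ℕ) → A j →ₗ[K] B k) (g : (k j : ℕ) → B j →ₗ[K] Z k)
    (hfg : ∀ k j, j ≤ k → ∀ a : A j, ∑ l ∈ Finset.Icc j k, g k l (f l j a) = 0)
    (hex : ∀ k (b : B k), g k k b = 0 → ∃ a, f k k a = b)
    (b : ∀ k, B k) (hb : ∀ k, ∑ j ∈ range (k + 1), g k j (b j) = 0) :
    ∃ a : ∀ k, A k, ∀ k, ∑ j ∈ range (k + 1), f k j (a j) = b k := by
  refine ⟨triSol f b, fun k => ?_⟩
  induction k using Nat.strong_induction_on with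
  | _ k ih =>
    apply triSol_spec
    apply hex
    have h1 := tri_dd f g hfg (fun j => if j < k then triSol f b j else 0) k
    have h2 := hb k
    rw [Finset.sum_range_succ] at h1 h2
    have h3 : ∑ l ∈ range k, g k l (∑ j ∈ range (l + 1),
        f l j (if j < k then triSol f b j else 0)) = ∑ l ∈ range k, g k l (b l) := by
      apply Finset.sum_congr rfl
      intro l hl
      have hl' := Finset.mem_range.1 hl
      rw [← ih l hl']
      congr 1
      apply Finset.sum_congr rfl
      intro j hj
      have hj' := Finset.mem_range.1 hj
      rw [if_pos (by omega)]
    have h4 : ∑ j ∈ range (k + 1), f k j (if j < k then triSol f b j else 0)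
        = ∑ j ∈ range k, f k j (triSol f b j) := by
      rw [Finset.sum_range_succ]
      rw [if_neg (lt_irrefl k), map_zero, add_zero]
      apply Finset.sum_congr rfl
      intro j hj
      rw [if_pos (Finset.mem_range.1 hj)]
    rw [h3, h4] at h1
    rw [map_sub]
    exact sub_eq_zero.2 (add_left_cancel (h2.trans h1.symm))

end Tri

/-! ### The homological criterion -/

section Crit
variable {K : Type} [CommRing K]
  {F : ℤ → Type} [∀ n, AddCommGroup (F n)] [∀ n, Module K (F n)]
  {G : ℤ → Type} [∀ n, AddCommGroup (G n)] [∀ n, Module K (G n)]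
  {dF : (n : ℤ) → F n →ₗ[K] F (n + 1)} {dG : (n : ℤ) → G n →ₗ[K] G (n + 1)}
  {f : (n : ℤ) → F n →ₗ[K] G n}

def ConeExact (dF : (n : ℤ) → F n →ₗ[K] F (n + 1)) (dG : (n : ℤ) → G n →ₗ[K] G (n + 1))
    (f : (n : ℤ) → F n →ₗ[K] G n) : Prop :=
  ∀ (a : ℤ) (x : F (a + 1 + 1)) (y : G (a + 1)), dF (a + 1 + 1) x = 0 →
    f (a + 1 + 1) x = dG (a + 1) y →
    ∃ (v : F (a + 1)) (w : G a), dF (a + 1) v = x ∧ y = f (a + 1) v + dG a w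

lemma mem_range_pcast (d : (n : ℤ) → F n →ₗ[K] F (n + 1)) (a b : ℤ) (h : b + 1 = a + 1)
    (x : F (a + 1)) :
    x ∈ LinearMap.range (pcast K F h ∘ₗ d b) ↔ ∃ v, d a v = x := by
  obtain rfl : b = a := by omega
  rfl

lemma mk_eq_mk (d : (n : ℤ) → F n →ₗ[K] F (n + 1)) (a : ℤ) (x y : LinearMap.ker (d (a + 1))) :
    (Submodule.Quotient.mk x : HomologyOf K F d (a + 1)) = Submodule.Quotient.mk y ↔
      ∃ v, d a v = x.1 - y.1 := by
  rw [Submodule.Quotient.eq, Submodule.mem_comap, mem_range_pcast d a]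
  rfl

lemma mk_eq_zero' (d : (n : ℤ) → F n →ₗ[K] F (n + 1)) (a : ℤ) (x : LinearMap.ker (d (a + 1))) :
    (Submodule.Quotient.mk x : HomologyOf K F d (a + 1)) = 0 ↔
      ∃ v, d a v = x.1 := by
  rw [Submodule.Quotient.mk_eq_zero, Submodule.mem_comap, mem_range_pcast d a]
  rfl

lemma coneExact_of_iso (hf : ∀ n x, f (n + 1) (dF n x) = dG n (f n x))
    (h : InducesIso K F G dF dG f) : ConeExact dF dG f := by
  intro a x y hx hxy
  have hker : ∀ n (z : F n), dF n z = 0 → f n z ∈ LinearMap.ker (dG n) := by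
    intro n z hz
    rw [LinearMap.mem_ker, ← hf, hz, map_zero]
  obtain ⟨φ, hφ, hφ2⟩ := h (a + 1 + 1)
  have h1 := hφ2 x hx (hker _ x hx)
  have h2 : (Submodule.Quotient.mk ⟨f (a + 1 + 1) x, hker _ x hx⟩ :
      HomologyOf K G dG (a + 1 + 1)) = 0 := (mk_eq_zero' dG (a + 1) _).2 ⟨y, hxy.symm⟩
  rw [h2] at h1
  have h3 := hφ.1 (h1.trans (map_zero φ).symm)
  obtain ⟨v, hv⟩ := (mk_eq_zero' dF (a + 1) _).1 h3
  obtain ⟨ψ, hψ, hψ2⟩ := h (a + 1)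
  have hy : y - f (a + 1) v ∈ LinearMap.ker (dG (a + 1)) := by
    rw [LinearMap.mem_ker, map_sub, ← hf, hv, ← hxy, sub_self]
  obtain ⟨z, hz⟩ := hψ.2 (Submodule.Quotient.mk ⟨_, hy⟩)
  obtain ⟨⟨z, hzk⟩, rfl⟩ := Submodule.Quotient.mk_surjective _ z
  rw [hψ2 z hzk (hker _ z hzk)] at hz
  obtain ⟨w, hw⟩ := (mk_eq_mk dG a _ _).1 hz.symm
  refine ⟨v + z, w, ?_, ?_⟩
  · rw [map_add, hv, LinearMap.mem_ker.1 hzk, add_zero]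
  · rw [hw, map_add]
    simp only
    abel

lemma iso_of_coneExact (hf : ∀ n x, f (n + 1) (dF n x) = dG n (f n x))
    (h : ConeExact dF dG f) : InducesIso K F G dF dG f := by
  intro n
  obtain ⟨a, rfl⟩ : ∃ a, n = a + 1 + 1 := ⟨n - 2, by ring⟩
  have hker : ∀ n (z : F n), z ∈ LinearMap.ker (dF n) → f n z ∈ LinearMap.ker (dG n) := by
    intro n z hz
    rw [LinearMap.mem_ker, ← hf, LinearMap.mem_ker.1 hz, map_zero]
  refine ⟨Submodule.mapQ _ _ ((f (a + 1 + 1)).restrict (hker _)) ?_, ⟨?_, ?_⟩, ?_⟩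
  · rintro ⟨x, hx⟩ hxr
    rw [Submodule.mem_comap, mem_range_pcast dF (a + 1)] at hxr
    obtain ⟨v, hv⟩ := hxr
    rw [Submodule.mem_comap, Submodule.mem_comap, mem_range_pcast dG (a + 1)]
    refine ⟨f _ v, ?_⟩
    rw [← hf, hv]
    rfl
  · rw [injective_iff_map_eq_zero]
    intro q hq
    obtain ⟨⟨x, hx⟩, rfl⟩ := Submodule.Quotient.mk_surjective _ q
    obtain ⟨y, hy⟩ := (mk_eq_zero' dG (a + 1) _).1 hq
    obtain ⟨v, w, hv, -⟩ := h a x y hx hy.symm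
    exact (mk_eq_zero' dF (a + 1) _).2 ⟨v, hv⟩
  · intro q
    obtain ⟨⟨y, hy⟩, rfl⟩ := Submodule.Quotient.mk_surjective _ q
    obtain ⟨v, w, hv, hw⟩ := h (a + 1) 0 y (map_zero _)
      (by rw [map_zero]; exact (LinearMap.mem_ker.1 hy).symm)
    refine ⟨Submodule.Quotient.mk ⟨v, hv⟩, ?_⟩
    refine (mk_eq_mk dG (a + 1) _ _).2 ⟨-w, ?_⟩
    show dG (a + 1) (-w) = f _ v - y
    rw [hw, map_neg]
    abel
  · intro x hx hy
    rfl

end Crit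

/-! ### Operators with free target degree -/

section Ops
variable {K : Type} [CommRing K]
  {C : ℤ → Type} [∀ n, AddCommGroup (C n)] [∀ n, Module K (C n)]
  {D : ℤ → Type} [∀ n, AddCommGroup (D n)] [∀ n, Module K (D n)]

lemma tr_self (a : ℤ) (x : C a) : tr K C a a x = x := by
  simp [tr, pcast]

lemma tr_tr {a b : ℤ} (h : a = b) (c : ℤ) (x : C a) :
    tr K C b c (tr K C a b x) = tr K C a c x := by
  subst h
  rw [tr_self]

def op (S : S1Struct K C) (i : ℕ) (a b : ℤ) : C a →ₗ[K] C b :=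
  tr K C (a + 1 - 2 * (i : ℤ)) b ∘ₗ S.δ i a

def kop {S : S1Struct K C} {T : S1Struct K D} (κ : S1Map K C D S T) (i : ℕ) (a b : ℤ) :
    C a →ₗ[K] D b :=
  tr K D (a - 2 * (i : ℤ)) b ∘ₗ κ.κ i a

lemma op_rel (S : S1Struct K C) (k : ℕ) (a c : ℤ) (b : ℕ → ℤ)
    (hb : ∀ j, b j = a + 1 - 2 * (j : ℤ)) (hc : c = a + 2 - 2 * (k : ℤ)) (x : C a) :
    ∑ p ∈ antidiagonal k, op S p.1 (b p.2) c (op S p.2 a (b p.2) x) = 0 := by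
  obtain rfl : b = fun j : ℕ => a + 1 - 2 * (j : ℤ) := funext hb
  subst hc
  rw [← S.rel k a x]
  apply Finset.sum_congr rfl
  intro p _
  simp only [op, LinearMap.comp_apply, tr_self]

lemma kop_rel {S : S1Struct K C} {T : S1Struct K D} (κ : S1Map K C D S T) (k : ℕ) (a c : ℤ)
    (b b' : ℕ → ℤ) (hb : ∀ j, b j = a + 1 - 2 * (j : ℤ)) (hb' : ∀ j, b' j = a - 2 * (j : ℤ))
    (hc : c = a + 1 - 2 * (k : ℤ)) (x : C a) :
    ∑ p ∈ antidiagonal k, kop κ p.1 (b p.2) c (op S p.2 a (b p.2) x) =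
    ∑ p ∈ antidiagonal k, op T p.1 (b' p.2) c (kop κ p.2 a (b' p.2) x) := by
  obtain rfl : b = fun j : ℕ => a + 1 - 2 * (j : ℤ) := funext hb
  obtain rfl : b' = fun j : ℕ => a - 2 * (j : ℤ) := funext hb'
  subst hc
  have := κ.rel k a x
  rw [Finset.sum_sub_distrib, sub_eq_zero] at this
  simp only [op, kop, LinearMap.comp_apply, tr_self]
  rw [this]
  exact (Finset.Nat.sum_antidiagonal_swap
    (f := fun p : ℕ × ℕ => tr K D (a - 2 * (p.1 : ℤ) + 1 - 2 * (p.2 : ℤ)) (a + 1 - 2 * (k : ℤ))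
          (T.δ p.2 (a - 2 * (p.1 : ℤ)) (κ.κ p.1 a x)))).symm

lemma sum_anti {M : Type} [AddCommMonoid M] (k : ℕ) (h : ℕ → ℕ → M) :
    ∑ p ∈ antidiagonal k, h p.1 p.2 = ∑ j ∈ range (k + 1), h (k - j) j := by
  rw [← Finset.Nat.sum_antidiagonal_swap]
  exact Finset.Nat.sum_antidiagonal_eq_sum_range_succ (fun i j => h j i) k

lemma sum_Icc_anti {M : Type} [AddCommMonoid M] (j k : ℕ) (hjk : j ≤ k) (h : ℕ → ℕ → ℕ → M) :
    ∑ l ∈ Finset.Icc j k, h (k - l) (l - j) l =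
      ∑ p ∈ antidiagonal (k - j), h p.1 p.2 (j + p.2) := by
  rw [sum_anti (k - j) (fun i t => h i t (j + t))]
  symm
  apply Finset.sum_bij (fun t _ => j + t)
  · intro t ht; simp at ht ⊢; omega
  · intro t _ t' _ h; omega
  · intro l hl; simp at hl; exact ⟨l - j, by simp; omega, by omega⟩
  · intro t ht
    have := Finset.mem_range.1 ht
    have e1 : k - (j + t) = k - j - t := by omega
    have e2 : j + t - j = t := by omega
    rw [e1, e2]

variable {S : S1Struct K C} {T : S1Struct K D} (κ : S1Map K C D S T)

/-- First cone matrix. -/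
def coneF (s : ℕ → ℤ) (a : ℤ) (k j : ℕ) :
    (C (a + 1 - 2 * s j) × D (a - 2 * s j)) →ₗ[K]
      (C (a + 1 + 1 - 2 * s k) × D (a + 1 - 2 * s k)) :=
  LinearMap.prod (op S (k - j) _ _ ∘ₗ LinearMap.fst K _ _)
    (kop κ (k - j) _ _ ∘ₗ LinearMap.fst K _ _ + op T (k - j) _ _ ∘ₗ LinearMap.snd K _ _)

/-- Second cone matrix. -/
def coneG (s : ℕ → ℤ) (a : ℤ) (k j : ℕ) :
    (C (a + 1 + 1 - 2 * s j) × D (a + 1 - 2 * s j)) →ₗ[K]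
      (C (a + 1 + 1 + 1 - 2 * s k) × D (a + 1 + 1 - 2 * s k)) :=
  LinearMap.prod (op S (k - j) _ _ ∘ₗ LinearMap.fst K _ _)
    (kop κ (k - j) _ _ ∘ₗ LinearMap.fst K _ _ - op T (k - j) _ _ ∘ₗ LinearMap.snd K _ _)

lemma coneF_apply (s : ℕ → ℤ) (a : ℤ) (k j : ℕ) (z : C (a + 1 - 2 * s j) × D (a - 2 * s j)) :
    coneF κ s a k j z = (op S (k - j) _ _ z.1, kop κ (k - j) _ _ z.1 + op T (k - j) _ _ z.2) := rfl

lemma coneG_apply (s : ℕ → ℤ) (a : ℤ) (k j : ℕ)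
    (z : C (a + 1 + 1 - 2 * s j) × D (a + 1 - 2 * s j)) :
    coneG κ s a k j z = (op S (k - j) _ _ z.1, kop κ (k - j) _ _ z.1 - op T (k - j) _ _ z.2) := rfl

lemma cone_GF (s : ℕ → ℤ) (m : ℤ) (hs : ∀ k, s k = m + (k : ℤ)) (a : ℤ) (k j : ℕ) (hjk : j ≤ k)
    (z : C (a + 1 - 2 * s j) × D (a - 2 * s j)) :
    ∑ l ∈ Finset.Icc j k, coneG κ s a k l (coneF κ s a l j z) = 0 := by
  obtain ⟨v, w⟩ := z
  have hk : ((k - j : ℕ) : ℤ) = k - j := by omega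
  have e1 := op_rel S (k - j) (a + 1 - 2 * s j) (a + 1 + 1 + 1 - 2 * s k)
    (fun t => a + 1 + 1 - 2 * s (j + t)) (by intro t; simp only [hs]; push_cast; ring)
    (by simp only [hs, hk]; ring) v
  have e2 := op_rel T (k - j) (a - 2 * s j) (a + 1 + 1 - 2 * s k)
    (fun t => a + 1 - 2 * s (j + t)) (by intro t; simp only [hs]; push_cast; ring)
    (by simp only [hs, hk]; ring) w
  have e3 := kop_rel κ (k - j) (a + 1 - 2 * s j) (a + 1 + 1 - 2 * s k)
    (fun t => a + 1 + 1 - 2 * s (j + t)) (fun t => a + 1 - 2 * s (j + t))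
    (by intro t; simp only [hs]; push_cast; ring)
    (by intro t; simp only [hs]; push_cast; ring)
    (by simp only [hs, hk]; ring) v
  apply Prod.ext
  · rw [Prod.fst_sum]
    exact (sum_Icc_anti j k hjk (fun i t l => op S i (a + 1 + 1 - 2 * s l)
      (a + 1 + 1 + 1 - 2 * s k) (op S t _ _ v))).trans e1
  · rw [Prod.snd_sum]
    have r1 := (sum_Icc_anti j k hjk (fun i t l => op T i (a + 1 - 2 * s l)
      (a + 1 + 1 - 2 * s k) (op T t _ _ w))).trans e2
    have r2 := (sum_Icc_anti j k hjk (fun i t l => kop κ i (a + 1 + 1 - 2 * s l)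
      (a + 1 + 1 - 2 * s k) (op S t _ _ v))).trans (e3.trans
      (sum_Icc_anti j k hjk (fun i t l => op T i (a + 1 - 2 * s l)
      (a + 1 + 1 - 2 * s k) (kop κ t _ _ v))).symm)
    simp only [coneF_apply, coneG_apply,
      map_add]
    rw [Finset.sum_sub_distrib, Finset.sum_add_distrib, r1, r2]
    simp

lemma d0_k0 (n : ℤ) (x : C n) :
    k0 K C D κ (n + 1) (d0 K C S n x) = d0 K D T n (k0 K C D κ n x) := by
  have := kop_rel κ 0 n (n + 1) (fun j => if j = 0 then n + 1 else n + 1 - 2 * (j : ℤ))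
    (fun j => if j = 0 then n else n - 2 * (j : ℤ))
    (by intro j; split_ifs with h <;> simp [h]) (by intro j; split_ifs with h <;> simp [h])
    (by simp) x
  simp at this
  exact this

lemma cone_exact0 (h : ConeExact (d0 K C S) (d0 K D T) (k0 K C D κ)) (a b c e : ℤ)
    (hb : b = a + 1) (hc : c = b + 1) (he : e = c + 1) (x : C c) (y : D b)
    (hx : op S 0 c e x = 0) (hxy : kop κ 0 c c x = op T 0 b c y) :
    ∃ (v : C b) (w : D a), op S 0 b c v = x ∧ y = kop κ 0 b b v + op T 0 a b w := by
  subst hb; subst hc; subst he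
  exact h a x y hx hxy

lemma seq_exact (h : ConeExact (d0 K C S) (d0 K D T) (k0 K C D κ))
    (s : ℕ → ℤ) (m : ℤ) (hs : ∀ k, s k = m + (k : ℤ)) (a : ℤ)
    (x : ∀ k, C (a + 1 + 1 - 2 * s k)) (y : ∀ k, D (a + 1 - 2 * s k))
    (hx : ∀ k, ∑ p ∈ antidiagonal k, op S p.1 _ (a + 1 + 1 + 1 - 2 * s k) (x p.2) = 0)
    (hxy : ∀ k, ∑ p ∈ antidiagonal k, kop κ p.1 _ (a + 1 + 1 - 2 * s k) (x p.2) =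
      ∑ p ∈ antidiagonal k, op T p.1 _ (a + 1 + 1 - 2 * s k) (y p.2)) :
    ∃ (v : ∀ k, C (a + 1 - 2 * s k)) (w : ∀ k, D (a - 2 * s k)),
      (∀ k, ∑ p ∈ antidiagonal k, op S p.1 _ (a + 1 + 1 - 2 * s k) (v p.2) = x k) ∧
      ∀ k, y k = ∑ p ∈ antidiagonal k, kop κ p.1 _ (a + 1 - 2 * s k) (v p.2) +
        ∑ p ∈ antidiagonal k, op T p.1 _ (a + 1 - 2 * s k) (w p.2) := by
  obtain ⟨z, hz⟩ := tri_exact (coneF κ s a) (coneG κ s a)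
    (fun k j hjk z => cone_GF κ s m hs a k j hjk z) (by
      rintro k ⟨x, y⟩ hg
      have h1 := congrArg Prod.fst hg
      have h2 := congrArg Prod.snd hg
      simp only [coneG_apply, Nat.sub_self,
        Prod.fst_zero, Prod.snd_zero] at h1 h2
      obtain ⟨v, w, hv, hw⟩ := cone_exact0 κ h (a - 2 * s k) (a + 1 - 2 * s k)
        (a + 1 + 1 - 2 * s k) (a + 1 + 1 + 1 - 2 * s k) (by ring) (by ring) (by ring) x y h1
        (sub_eq_zero.1 h2)
      refine ⟨(v, w), ?_⟩
      simp only [coneF_apply, Nat.sub_self, hv, ← hw])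
    (fun k => (x k, y k)) (by
      intro k
      have h1 := hx k
      have h2 := hxy k
      rw [sum_anti k (fun i j => op S i _ (a + 1 + 1 + 1 - 2 * s k) (x j))] at h1
      rw [sum_anti k (fun i j => kop κ i _ (a + 1 + 1 - 2 * s k) (x j)),
        sum_anti k (fun i j => op T i _ (a + 1 + 1 - 2 * s k) (y j)), ← sub_eq_zero,
        ← Finset.sum_sub_distrib] at h2
      apply Prod.ext
      · rw [Prod.fst_sum]; exact h1
      · rw [Prod.snd_sum]; exact h2)
  refine ⟨fun k => (z k).1, fun k => (z k).2, fun k => ?_, fun k => ?_⟩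
  · have := congrArg Prod.fst (hz k)
    rw [Prod.fst_sum] at this
    rw [sum_anti k (fun i j => op S i _ (a + 1 + 1 - 2 * s k) (z j).1)]
    exact this
  · have := congrArg Prod.snd (hz k)
    rw [Prod.snd_sum] at this
    rw [sum_anti k (fun i j => kop κ i _ (a + 1 - 2 * s k) (z j).1),
      sum_anti k (fun i j => op T i _ (a + 1 - 2 * s k) (z j).2), ← Finset.sum_add_distrib]
    exact this.symm

lemma seq_comm (s : ℕ → ℤ) (m : ℤ) (hs : ∀ k, s k = m + (k : ℤ)) (n : ℤ)
    (x : ∀ k, C (n - 2 * s k)) (k : ℕ) :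
    ∑ p ∈ antidiagonal k, kop κ p.1 _ (n + 1 - 2 * s k)
      (∑ q ∈ antidiagonal p.2, op S q.1 _ (n + 1 - 2 * s p.2) (x q.2)) =
    ∑ p ∈ antidiagonal k, op T p.1 _ (n + 1 - 2 * s k)
      (∑ q ∈ antidiagonal p.2, kop κ q.1 _ (n - 2 * s p.2) (x q.2)) := by
  obtain ⟨a, rfl⟩ : ∃ a, n = a + 1 := ⟨n - 1, by ring⟩
  have h := congrArg Prod.snd (tri_dd (coneF κ s a) (coneG κ s a)
    (fun k j hjk z => cone_GF κ s m hs a k j hjk z) (fun j => (x j, 0)) k)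
  rw [Prod.snd_sum] at h
  simp only [coneF_apply, coneG_apply,
    map_zero, add_zero, Prod.fst_sum, Prod.snd_sum, Prod.snd_zero] at h
  rw [Finset.sum_sub_distrib, sub_eq_zero] at h
  have g1 : ∀ l, ∑ q ∈ antidiagonal l, op S q.1 _ (a + 1 + 1 - 2 * s l) (x q.2) = _ :=
    fun l => sum_anti l (fun i j => op S i _ (a + 1 + 1 - 2 * s l) (x j))
  have g2 : ∀ l, ∑ q ∈ antidiagonal l, kop κ q.1 _ (a + 1 - 2 * s l) (x q.2) = _ :=
    fun l => sum_anti l (fun i j => kop κ i _ (a + 1 - 2 * s l) (x j))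
  simp only [g1, g2]
  rw [sum_anti k (fun i l => kop κ i _ (a + 1 + 1 - 2 * s k)
      (∑ j ∈ range (l + 1), op S (l - j) _ (a + 1 + 1 - 2 * s l) (x j))),
    sum_anti k (fun i l => op T i _ (a + 1 + 1 - 2 * s k)
      (∑ j ∈ range (l + 1), kop κ (l - j) _ (a + 1 - 2 * s l) (x j)))]
  exact h

/-! ### The negative cyclic complex -/

lemma deltaNeg_apply' (S : S1Struct K C) (n : ℤ) (x : NegCyc C n) (k : ℕ) :
    deltaNeg K C S n x k =
      ∑ p ∈ antidiagonal k, op S p.1 (n - 2 * (p.2 : ℤ)) (n + 1 - 2 * (k : ℤ)) (x p.2) := rfl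

lemma kappaNeg_apply' (n : ℤ) (x : NegCyc C n) (k : ℕ) :
    kappaNeg K C D κ n x k =
      ∑ p ∈ antidiagonal k, kop κ p.1 (n - 2 * (p.2 : ℤ)) (n - 2 * (k : ℤ)) (x p.2) := by
  show ∑ p ∈ antidiagonal k, tr K D _ _ (tr K D _ _ _) = _
  apply Finset.sum_congr rfl
  intro p _
  rw [tr_tr (by ring)]
  rfl

lemma neg_iso (h : ConeExact (d0 K C S) (d0 K D T) (k0 K C D κ)) :
    InducesIso K (NegCyc C) (NegCyc D) (deltaNeg K C S) (deltaNeg K D T)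
      (kappaNeg K C D κ) := by
  apply iso_of_coneExact
  · intro n x
    funext k
    rw [kappaNeg_apply', deltaNeg_apply']
    simp only [kappaNeg_apply', deltaNeg_apply']
    exact seq_comm κ (fun k => (k : ℤ)) 0 (by simp) n x k
  · intro a x y hx hxy
    obtain ⟨v, w, hv, hw⟩ := seq_exact κ h (fun k => (k : ℤ)) 0 (by simp) a x y
      (fun k => congrFun hx k)
      (fun k => (kappaNeg_apply' κ _ x k).symm.trans (congrFun hxy k))
    refine ⟨v, w, funext hv, funext fun k => ?_⟩
    rw [Pi.add_apply, kappaNeg_apply']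
    exact hw k

/-! ### The complexes `u^m C⁻` -/

lemma finsum_anti {M : Type} [AddCommMonoid M] (m : ℤ) (k : ℕ) (h : ℕ → ℤ → M)
    (h0 : ∀ i j, j < m → h i j = 0) :
    ∑ᶠ i : ℕ, h i (m + k - i) = ∑ p ∈ antidiagonal k, h p.1 (m + p.2) := by
  rw [Finset.Nat.sum_antidiagonal_eq_sum_range_succ (fun i j => h i (m + (j : ℤ))) k]
  rw [finsum_eq_sum_of_support_subset (s := range (k + 1))]
  · apply Finset.sum_congr rfl
    intro i hi
    have := Finset.mem_range.1 hi
    congr 1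
    omega
  · intro i hi
    rw [Function.mem_support] at hi
    by_contra hcon
    apply hi
    apply h0
    simp at hcon
    omega

lemma deltaRes_apply' (S : S1Struct K C) (m n : ℤ) (x : uPow K C m n) (k : ℕ) :
    (deltaRes K C S m n x).1.1 (m + k) =
      ∑ p ∈ antidiagonal k, op S p.1 (n - 2 * (m + (p.2 : ℤ))) (n + 1 - 2 * (m + (k : ℤ)))
        (x.1.1 (m + p.2)) := by
  refine Eq.trans ?_ (finsum_anti m k (fun i j => op S i (n - 2 * j) (n + 1 - 2 * (m + (k : ℤ)))
    (x.1.1 j)) ?_)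
  · rfl
  · intro i j hj
    simp only [x.2 j hj, map_zero]

lemma kappaRes_apply' (m n : ℤ) (x : uPow K C m n) (k : ℕ) :
    (kappaRes K C D κ m n x).1.1 (m + k) =
      ∑ p ∈ antidiagonal k, kop κ p.1 (n - 2 * (m + (p.2 : ℤ))) (n - 2 * (m + (k : ℤ)))
        (x.1.1 (m + p.2)) := by
  refine Eq.trans ?_ (finsum_anti m k (fun i j => kop κ i (n - 2 * j) (n - 2 * (m + (k : ℤ)))
    (x.1.1 j)) ?_)
  · show ∑ᶠ i : ℕ, tr K D _ _ (tr K D _ _ _) = _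
    apply finsum_congr
    intro i
    rw [tr_tr (by ring)]
    rfl
  · intro i j hj
    simp only [x.2 j hj, map_zero]

lemma uPow_ext (m n : ℤ) (x y : uPow K C m n) (h : ∀ k : ℕ, x.1.1 (m + k) = y.1.1 (m + k)) :
    x = y := by
  apply Subtype.ext
  apply Subtype.ext
  funext i
  by_cases hi : i < m
  · rw [x.2 i hi, y.2 i hi]
  · obtain ⟨k, rfl⟩ : ∃ k : ℕ, i = m + k := ⟨(i - m).toNat, by omega⟩
    exact h k

lemma uPow_mk (K : Type) [CommRing K] (C : ℤ → Type) [∀ n, AddCommGroup (C n)]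
    [∀ n, Module K (C n)] (m n : ℤ) (v : ∀ k : ℕ, C (n - 2 * (m + (k : ℤ)))) :
    ∃ x : uPow K C m n, ∀ k : ℕ, x.1.1 (m + k) = v k := by
  classical
  let g : (i : ℤ) → C (n - 2 * i) := fun i =>
    if i < m then 0 else tr K C (n - 2 * (m + ((i - m).toNat : ℤ))) (n - 2 * i) (v (i - m).toNat)
  have hg : ∀ i < m, g i = 0 := fun i hi => if_pos hi
  refine ⟨⟨⟨g, m, hg⟩, hg⟩, fun k => ?_⟩
  show g (m + k) = v k
  simp only [g]
  rw [if_neg (by omega)]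
  have hk : (m + (k : ℤ) - m).toNat = k := by omega
  rw [hk, tr_self]

lemma uPow_iso (h : ConeExact (d0 K C S) (d0 K D T) (k0 K C D κ)) (m : ℤ) :
    InducesIso K (fun d => ↥(uPow K C m d)) (fun d => ↥(uPow K D m d))
        (deltaRes K C S m) (deltaRes K D T m) (kappaRes K C D κ m) := by
  apply iso_of_coneExact
  · intro n x
    apply uPow_ext
    intro k
    rw [kappaRes_apply', deltaRes_apply']
    simp only [kappaRes_apply', deltaRes_apply']
    exact seq_comm κ (fun k => m + (k : ℤ)) m (by simp) n (fun k => x.1.1 (m + k)) k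
  · intro a x y hx hxy
    obtain ⟨v, w, hv, hw⟩ := seq_exact κ h (fun k => m + (k : ℤ)) m (by simp) a
      (fun k => x.1.1 (m + k)) (fun k => y.1.1 (m + k))
      (fun k => by
        rw [← deltaRes_apply', hx]; rfl)
      (fun k => by
        rw [← deltaRes_apply', ← kappaRes_apply', hxy])
    obtain ⟨v', hv'⟩ := uPow_mk K C m (a + 1) v
    obtain ⟨w', hw'⟩ := uPow_mk K D m a w
    refine ⟨v', w', uPow_ext _ _ _ _ fun k => ?_, uPow_ext _ _ _ _ fun k => ?_⟩
    · rw [deltaRes_apply']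
      simp only [hv']
      exact hv k
    · show _ = (kappaRes K C D κ m (a + 1) v').1.1 (m + k) + (deltaRes K D T m a w').1.1 (m + k)
      rw [deltaRes_apply', kappaRes_apply']
      simp only [hv', hw']
      exact hw k

end Ops

end Aux

theorem stmt7 (K : Type) [CommRing K]
    (C : ℤ → Type) [∀ n, AddCommGroup (C n)] [∀ n, Module K (C n)]
    (D : ℤ → Type) [∀ n, AddCommGroup (D n)] [∀ n, Module K (D n)]
    (S : S1Struct K C) (T : S1Struct K D) (κ : S1Map K C D S T)
    (hqis : InducesIso K C D (d0 K C S) (d0 K D T) (k0 K C D κ)) :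
    InducesIso K (NegCyc C) (NegCyc D) (deltaNeg K C S) (deltaNeg K D T) (kappaNeg K C D κ)
    ∧ ∀ m : ℤ,
      InducesIso K (fun d => ↥(uPow K C m d)) (fun d => ↥(uPow K D m d))
        (deltaRes K C S m) (deltaRes K D T m) (kappaRes K C D κ m) := by
  have h := coneExact_of_iso (d0_k0 κ) hqis
  exact ⟨neg_iso κ h, uPow_iso κ h⟩
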